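/- arXiv:2306.11241 — 3 statements merged into one kernel-verified Lean document; each statement's English description precedes it below -/
import Mathlib

section
/- For every integer B ≥ 2 there exists d₀ such that for every d ≥ d₀ and every valid randomized online algorithm for {0,1} d-dimensional vector bin packing with bin size B (given by a finite probability space (Ω, μ) and a family (A_ω)_{ω∈Ω} of valid deterministic online algorithms), there exists an instance I with OPT(I) = 2 and E_{ω∼μ}[A_ω(I)]/OPT(I) > (((B+1)! · d)^{1/(B+1)} − 1)/(4(B+1)). -/
/-!
The hard instances are random. Fix `n` with `C(n, B+1) ≤ d < C(n+1, B+1)` and index the coordinates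
by the `(B+1)`-subsets `S` of `{0, …, n-1}`. Colour the items with two colours, items `0` and `1`
differently and the others by independent fair coins. Item `i` has a one in coordinate `S` iff
`i ∈ S`, except that the largest element of `S` has a one only if the remaining `B` elements of `S`
are not monochromatic (`vec`). Then:

* each colour class is a feasible bin, and the coordinate `{0, …, B}` prevents a single bin, so the
  optimum is `2` (`opt_eq_two`);
* a bin containing `B` items that are not all of one colour can never receive another item
  (`valid_mono`);
* the vector of item `i` depends only on the colours of earlier items, so the algorithm chooses the
  bin of `i` without any information on the colour of `i`.

Let `gain i` be `1` if item `i` enters a nonempty monochromatic bin of its own colour, `-1` if it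
enters a nonempty monochromatic bin of the other colour, and `0` otherwise. In every bin, the number
of items is at most `B + 1` plus the total gain of its items (`bin_bound`), so
`n ≤ (B + 1) · #bins + ∑ gain` (`total_bound`). The total gain has nonpositive expectation, because
flipping the colour of `i` negates `gain i` for `i ≥ 2` (`sum_gain_nonpos`). Hence the expected
number of bins is at least `n / (B + 1)` on average over the colourings, while
`((B+1)! d)^{1/(B+1)} < n + 1` (`exists_size`).
-/

/-- First-fit assignment for {0,1} d-dimensional vector bin packing with bin size B:
`firstFit d B v i` is the least positive bin index `j` such that adding `v i` to the
vectors among `v 0, …, v (i-1)` already assigned to bin `j` keeps every coordinate sum `≤ B`. -/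
noncomputable def firstFit (d B : ℕ) (v : ℕ → Fin d → ℕ) : ℕ → ℕ
  | i => sInf {j | 1 ≤ j ∧ ∀ r : Fin d,
      (∑ i' ∈ (Finset.range i).attach,
        if firstFit d B v i'.1 = j then v i'.1 r else 0) + v i r ≤ B}
termination_by i => i
decreasing_by exact Finset.mem_range.mp i'.2

/-- Number of bins used by first-fit on the instance `v 0, …, v (n-1)`. -/
noncomputable def ffBins (d B n : ℕ) (v : ℕ → Fin d → ℕ) : ℕ :=
  Finset.sup (Finset.range n) (firstFit d B v)

/-- Optimal number of bins: the least `m` such that `{0,…,n-1}` can be partitioned into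
`m` bins (fibers of `f`), each with every coordinate sum `≤ B`. -/
noncomputable def vbpOPT (d B n : ℕ) (v : ℕ → Fin d → ℕ) : ℕ :=
  sInf {m | ∃ f : ℕ → ℕ, (∀ i < n, f i < m) ∧
    ∀ j, ∀ r : Fin d, (∑ i ∈ Finset.range n, if f i = j then v i r else 0) ≤ B}

/-- The bin assigned to the i-th vector by an online algorithm `A` (which sees `v 0, …, v i`). -/
def algAssign (d : ℕ) (A : List (Fin d → ℕ) → ℕ) (v : ℕ → Fin d → ℕ) (i : ℕ) : ℕ :=
  A ((List.range (i + 1)).map v)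

/-- A deterministic online algorithm is valid if on every {0,1} input sequence every
resulting bin is feasible (coordinate sums `≤ B`). -/
def ValidAlg (d B : ℕ) (A : List (Fin d → ℕ) → ℕ) : Prop :=
  ∀ n : ℕ, ∀ v : ℕ → Fin d → ℕ, (∀ i r, v i r ≤ 1) →
    ∀ j, ∀ r : Fin d,
      (∑ i ∈ Finset.range n, if algAssign d A v i = j then v i r else 0) ≤ B

/-- Number of distinct bins used by `A` on the instance `v 0, …, v (n-1)`. -/
def algBins (d n : ℕ) (A : List (Fin d → ℕ) → ℕ) (v : ℕ → Fin d → ℕ) : ℕ :=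
  ((Finset.range n).image (algAssign d A v)).card

section

open Finset

/-! ### The accounting inequality for a coloured assignment -/

/-- The items placed before item `i` in the bin of item `i`, under the assignment `f`. -/
def earlier (f : ℕ → ℕ) (i : ℕ) : Finset ℕ := {k ∈ range i | f k = f i}

/-- All items of `X` have the same colour; the empty set is monochromatic. -/
def Mono (col : ℕ → Bool) (X : Finset ℕ) : Prop := ∀ a ∈ X, ∀ b ∈ X, col a = col b

open Classical in
/-- `1` or `-1` if item `i` enters a nonempty monochromatic bin of its own colour or of the other
colour, respectively; `0` if it opens a bin or enters a bin with both colours. -/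
noncomputable def gain (col : ℕ → Bool) (f : ℕ → ℕ) (i : ℕ) : ℤ :=
  if (earlier f i).Nonempty ∧ Mono col (earlier f i) then
    if ∀ k ∈ earlier f i, col k = col i then 1 else -1
  else 0

/-- Items are put into bin `j` one after the other. While the bin is monochromatic, its size is one
more than its gain. The item that breaks this brings the gain to (size) `- 3`, and further items
have gain zero and can only raise the size up to `B`. -/
lemma bin_bound (B : ℕ) (hB : 2 ≤ B) (col : ℕ → Bool) (f : ℕ → ℕ) (n j : ℕ)
    (H : ∀ i < n, ∀ T ⊆ earlier f i, #T = B → Mono col T) :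
    ((#{k ∈ range n | f k = j} : ℕ) : ℤ) ≤
      (B + 1) + ∑ i ∈ range n with f i = j, gain col f i := by
  -- The invariant of the induction on the number of items.
  have key : ∀ t ≤ n,
      (¬ ({k ∈ range t | f k = j}).Nonempty → ∑ i ∈ range t with f i = j, gain col f i = 0) ∧
      (({k ∈ range t | f k = j}).Nonempty → Mono col {k ∈ range t | f k = j} →
        ((#{k ∈ range t | f k = j} : ℕ) : ℤ) = 1 + ∑ i ∈ range t with f i = j, gain col f i) ∧
      (¬ Mono col {k ∈ range t | f k = j} →
        -1 ≤ ∑ i ∈ range t with f i = j, gain col f i ∧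
        ((#{k ∈ range t | f k = j} : ℕ) : ℤ) ≤
          (B + 1) + ∑ i ∈ range t with f i = j, gain col f i) := by
    intro t
    induction t with
    | zero => intro _; simp [Mono]
    | succ t ih =>
      intro ht
      have ih := ih (by omega)
      by_cases hj : f t = j
      · have hE : earlier f t = {k ∈ range t | f k = j} := by simp [earlier, hj]
        have Ht := H t (by omega)
        have hfil : ({k ∈ range (t + 1) | f k = j}) = insert t {k ∈ range t | f k = j} := by
          rw [range_add_one, filter_insert, if_pos hj]
        have hnot : t ∉ ({k ∈ range t | f k = j}) := by simp
        rw [hfil, sum_insert hnot, card_insert_of_notMem hnot]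
        rw [hE] at Ht
        have hg := gain.eq_1 col f t
        rw [hE] at hg
        generalize ({k ∈ range t | f k = j}) = X at *
        generalize ∑ i ∈ X, gain col f i = G at *
        obtain ⟨h0, h1, h2⟩ := ih
        refine ⟨fun h => absurd (insert_nonempty t X) h, fun _ hm => ?_, fun hm => ?_⟩
        · have hmX : Mono col X := fun a ha b hb =>
            hm a (mem_insert_of_mem ha) b (mem_insert_of_mem hb)
          have hc : ∀ k ∈ X, col k = col t := fun k hk =>
            hm k (mem_insert_of_mem hk) t (mem_insert_self _ _)
          by_cases hne : X.Nonempty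
          · rw [if_pos ⟨hne, hmX⟩, if_pos hc] at hg
            have := h1 hne hmX
            push_cast; omega
          · rw [if_neg (fun h => hne h.1)] at hg
            have := h0 hne
            rw [not_nonempty_iff_eq_empty] at hne
            subst hne
            simp [hg, this]
        · by_cases hmX : Mono col X
          · have hc : ¬ ∀ k ∈ X, col k = col t := by
              intro hc
              apply hm
              intro a ha b hb
              have aux : ∀ k ∈ insert t X, col k = col t := by
                intro k hk
                rcases mem_insert.1 hk with rfl | hk
                · rfl
                · exact hc k hk
              rw [aux a ha, aux b hb]
            have hne : X.Nonempty := by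
              by_contra hne
              rw [not_nonempty_iff_eq_empty] at hne
              subst hne
              simp at hc
            rw [if_pos ⟨hne, hmX⟩, if_neg hc] at hg
            have := h1 hne hmX
            have hpos : 0 < #X := hne.card_pos
            push_cast
            constructor <;> omega
          · rw [if_neg (fun h => hmX h.2)] at hg
            obtain ⟨h3, h4⟩ := h2 hmX
            have hlt : #X < B := by
              by_contra hge
              push Not at hge
              apply hmX
              intro a ha b hb
              -- Two items of different colours extend to `B` items, since `2 ≤ B`.
              have hsub : ({a, b} : Finset ℕ) ⊆ X := by
                intro x hx
                simp only [mem_insert, mem_singleton] at hx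
                rcases hx with rfl | rfl <;> assumption
              obtain ⟨T, hT1, hT2, hT3⟩ := exists_subsuperset_card_eq hsub
                (card_le_two.trans hB) hge
              exact Ht T hT2 hT3 a (hT1 (by simp)) b (hT1 (by simp))
            push_cast
            constructor <;> omega
      · have hfil : ({k ∈ range (t + 1) | f k = j}) = {k ∈ range t | f k = j} := by
          rw [range_add_one, filter_insert, if_neg hj]
        rw [hfil]
        exact ih
  obtain ⟨h0, h1, h2⟩ := key n le_rfl
  by_cases hm : Mono col {k ∈ range n | f k = j}
  · by_cases hne : ({k ∈ range n | f k = j}).Nonempty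
    · have := h1 hne hm
      omega
    · have h0' := h0 hne
      rw [not_nonempty_iff_eq_empty] at hne
      rw [h0', hne]
      simp; omega
  · exact (h2 hm).2

lemma total_bound (B : ℕ) (hB : 2 ≤ B) (col : ℕ → Bool) (f : ℕ → ℕ) (n : ℕ)
    (H : ∀ i < n, ∀ T ⊆ earlier f i, #T = B → Mono col T) :
    (n : ℤ) ≤ (B + 1) * #((range n).image f) + ∑ i ∈ range n, gain col f i := by
  have hmap : ∀ i ∈ range n, f i ∈ (range n).image f := fun i hi => mem_image_of_mem f hi
  have h1 : (n : ℤ) = ∑ j ∈ (range n).image f, ((#{k ∈ range n | f k = j} : ℕ) : ℤ) := by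
    have := card_eq_sum_card_fiberwise (f := f) (s := range n) (t := (range n).image f)
      (fun i hi => hmap i hi)
    rw [card_range] at this
    exact_mod_cast this
  rw [h1, ← sum_fiberwise_of_maps_to hmap (gain col f)]
  calc _ ≤ ∑ j ∈ (range n).image f,
        (((B : ℤ) + 1) + ∑ i ∈ range n with f i = j, gain col f i) :=
        sum_le_sum fun j _ => bin_bound B hB col f n j H
    _ = _ := by rw [sum_add_distrib, sum_const, nsmul_eq_mul]; ring

/-! ### The random instance -/

/-- The colouring of the items given by the coins `c`: items `0` and `1` get different colours
regardless of the coins. The value at `i ≥ n` plays no role. -/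
def colOf (n : ℕ) (c : Fin n → Bool) (i : ℕ) : Bool :=
  if i = 0 then false else if i = 1 then true else if h : i < n then c ⟨i, h⟩ else false

open Classical in
/-- The vector of item `i`, where `s r` is the set of items indexing the coordinate `r`: a one in
the coordinates `r` with `i ∈ s r`, but if `i` is the largest element of `s r`, only when the other
elements of `s r` are not monochromatic. -/
noncomputable def vec {d : ℕ} (s : Fin d → Finset ℕ) (col : ℕ → Bool) (i : ℕ) (r : Fin d) : ℕ :=
  if i ∈ s r ∧ ((∀ k ∈ s r, k ≤ i) → ∃ a ∈ s r, ∃ b ∈ s r, a < i ∧ b < i ∧ col a ≠ col b)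
  then 1 else 0

lemma vec_le_one {d : ℕ} (s : Fin d → Finset ℕ) (col : ℕ → Bool) (i : ℕ) (r : Fin d) :
    vec s col i r ≤ 1 := by
  unfold vec; split_ifs <;> simp

/-- A vector carries no information on the colour of its own item or of later ones. -/
lemma vec_congr {d : ℕ} (s : Fin d → Finset ℕ) (col col' : ℕ → Bool) (i : ℕ)
    (h : ∀ k < i, col k = col' k) : vec s col i = vec s col' i := by
  funext r
  have : (∃ a ∈ s r, ∃ b ∈ s r, a < i ∧ b < i ∧ col a ≠ col b) ↔
      (∃ a ∈ s r, ∃ b ∈ s r, a < i ∧ b < i ∧ col' a ≠ col' b) := by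
    constructor
    · rintro ⟨a, ha, b, hb, hai, hbi, hab⟩
      exact ⟨a, ha, b, hb, hai, hbi, by rwa [← h a hai, ← h b hbi]⟩
    · rintro ⟨a, ha, b, hb, hai, hbi, hab⟩
      exact ⟨a, ha, b, hb, hai, hbi, by rwa [h a hai, h b hbi]⟩
  simp only [vec, this]

lemma algAssign_congr {d : ℕ} (A : List (Fin d → ℕ) → ℕ) (s : Fin d → Finset ℕ)
    (col col' : ℕ → Bool) (i : ℕ) (h : ∀ k < i, col k = col' k) :
    algAssign d A (vec s col) i = algAssign d A (vec s col') i := by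
  unfold algAssign
  congr 1
  apply List.map_congr_left
  intro k hk
  exact vec_congr s col col' k fun l hl => h l (by simp at hk; omega)

/-- If the elements of `s r` other than the largest one, `i`, are not monochromatic, then `s r`
does not fit into one bin. -/
lemma overfull {d : ℕ} (s : Fin d → Finset ℕ) (col : ℕ → Bool) (n i j : ℕ) (r : Fin d)
    (f : ℕ → ℕ) (hs : s r ⊆ range n) (hi : i ∈ s r) (hmax : ∀ k ∈ s r, k ≤ i)
    (hab : ∃ a ∈ s r, ∃ b ∈ s r, a < i ∧ b < i ∧ col a ≠ col b) (hf : ∀ k ∈ s r, f k = j) :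
    #(s r) ≤ ∑ k ∈ range n, if f k = j then vec s col k r else 0 := by
  calc #(s r) = ∑ k ∈ s r, 1 := by simp
    _ ≤ ∑ k ∈ s r, if f k = j then vec s col k r else 0 := by
        apply sum_le_sum
        intro k hk
        rw [if_pos (hf k hk), vec, if_pos]
        refine ⟨hk, fun hkmax => ?_⟩
        have hki : k = i := le_antisymm (hmax k hk) (hkmax i hi)
        rwa [hki]
    _ ≤ _ := sum_le_sum_of_subset hs

/-- In a valid packing, an item never joins a bin that contains `B` items not all of one colour. -/
lemma valid_mono {d : ℕ} (B n : ℕ) (A : List (Fin d → ℕ) → ℕ) (hA : ValidAlg d B A)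
    (s : Fin d → Finset ℕ)
    (hsurj : ∀ T ∈ powersetCard (B + 1) (range n), ∃ r, s r = T) (col : ℕ → Bool) :
    ∀ i < n, ∀ T ⊆ earlier (algAssign d A (vec s col)) i, #T = B → Mono col T := by
  intro i hi T hT hcard
  by_contra hm
  have hT' : ∀ k ∈ T, k < i ∧ algAssign d A (vec s col) k = algAssign d A (vec s col) i := by
    intro k hk
    simpa [earlier] using hT hk
  have hiT : i ∉ T := fun h => lt_irrefl _ (hT' i h).1
  have hsub : insert i T ⊆ range n := by
    intro k hk
    rcases mem_insert.1 hk with rfl | hk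
    · simpa using hi
    · have := (hT' k hk).1
      simp; omega
  obtain ⟨r, hr⟩ := hsurj (insert i T)
    (mem_powersetCard.2 ⟨hsub, by rw [card_insert_of_notMem hiT, hcard]⟩)
  have hge := overfull s col n i (algAssign d A (vec s col) i) r (algAssign d A (vec s col))
    (by rw [hr]; exact hsub) (by rw [hr]; exact mem_insert_self _ _)
    (by
      rw [hr]
      intro k hk
      rcases mem_insert.1 hk with rfl | hk
      · exact le_rfl
      · exact (hT' k hk).1.le)
    (by
      rw [hr]
      unfold Mono at hm
      push Not at hm
      obtain ⟨a, ha, b, hb, hab⟩ := hm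
      exact ⟨a, mem_insert_of_mem ha, b, mem_insert_of_mem hb, (hT' a ha).1, (hT' b hb).1, hab⟩)
    (by
      rw [hr]
      intro k hk
      rcases mem_insert.1 hk with rfl | hk
      · rfl
      · exact (hT' k hk).2)
  have hle := hA n (vec s col) (vec_le_one s col) (algAssign d A (vec s col) i) r
  rw [hr, card_insert_of_notMem hiT, hcard] at hge
  omega

lemma opt_eq_two {d : ℕ} (B n : ℕ) (hB : 2 ≤ B) (hn : B + 1 ≤ n) (s : Fin d → Finset ℕ)
    (hs : ∀ r, s r ∈ powersetCard (B + 1) (range n))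
    (hsurj : ∀ T ∈ powersetCard (B + 1) (range n), ∃ r, s r = T) (c : Fin n → Bool) :
    vbpOPT d B n (vec s (colOf n c)) = 2 := by
  set col := colOf n c with hcol
  have hfeas2 : ∀ j, ∀ r : Fin d,
      (∑ i ∈ range n, if (col i).toNat = j then vec s col i r else 0) ≤ B := by
    intro j r
    obtain ⟨hsub, hcard⟩ := mem_powersetCard.1 (hs r)
    -- Otherwise all `B + 1` members of `s r` have a one and the same colour; but then the largest
    -- of them has a zero.
    by_contra! hlt
    have hle : ∀ k ∈ range n, (if (col k).toNat = j then vec s col k r else 0) ≤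
        if k ∈ s r ∧ (col k).toNat = j ∧ vec s col k r = 1 then 1 else 0 := by
      intro k _
      have := vec_le_one s col k r
      by_cases hk : k ∈ s r
      · split_ifs <;> first | omega | (simp_all; omega)
      · have : vec s col k r = 0 := by simp [vec, hk]
        simp [this]
    have h2 := hlt.trans_le (sum_le_sum hle)
    rw [← card_filter] at h2
    have hss : ({k ∈ range n | k ∈ s r ∧ (col k).toNat = j ∧ vec s col k r = 1}) ⊆ s r := by
      intro k hk
      exact (mem_filter.1 hk).2.1
    have heq := eq_of_subset_of_card_le hss (by omega)
    have hall : ∀ k ∈ s r, (col k).toNat = j ∧ vec s col k r = 1 := by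
      intro k hk
      rw [← heq] at hk
      exact (mem_filter.1 hk).2.2
    have hne : (s r).Nonempty := card_pos.1 (by omega)
    have h1 := (hall _ (max'_mem (s r) hne)).2
    unfold vec at h1
    split_ifs at h1 with h
    · obtain ⟨a, ha, b, hb, -, -, hab⟩ := h.2 fun k hk => le_max' _ _ hk
      apply hab
      have := (hall a ha).1.trans (hall b hb).1.symm
      revert this
      cases col a <;> cases col b <;> simp
  unfold vbpOPT
  apply le_antisymm
  · exact Nat.sInf_le ⟨_, fun i _ => Bool.toNat_lt (col i), hfeas2⟩
  · apply le_csInf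
    · exact ⟨2, _, fun i _ => Bool.toNat_lt (col i), hfeas2⟩
    · rintro m ⟨f, hf, hfeas⟩
      by_contra! hm
      have hsubset : range (B + 1) ⊆ range n := range_subset_range.2 hn
      obtain ⟨r, hr⟩ := hsurj (range (B + 1)) (mem_powersetCard.2 ⟨hsubset, card_range _⟩)
      have hge := overfull s col n B 0 r f (by rw [hr]; exact hsubset) (by simp [hr])
        (by intro k hk; simp [hr] at hk; omega)
        ⟨0, by simp [hr], 1, by simp [hr]; omega, by omega, by omega, by simp [hcol, colOf]⟩
        (by
          intro k hk
          have := hf k (by simp [hr] at hk; omega)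
          omega)
      have hle := hfeas 0 r
      rw [hr, card_range] at hge
      omega

/-! ### Averaging over the colourings -/

/-- Flip the coin of item `i`. -/
def flipAt {n : ℕ} (i : Fin n) (c : Fin n → Bool) : Fin n → Bool :=
  Function.update c i (!c i)

lemma flipAt_involutive {n : ℕ} (i : Fin n) : Function.Involutive (flipAt i) := by
  intro c
  funext k
  by_cases h : k = i
  · subst h; simp [flipAt]
  · simp [flipAt, h]

lemma colOf_flipAt_of_ne {n : ℕ} (i : Fin n) (c : Fin n → Bool) (k : ℕ) (hk : k ≠ i) :
    colOf n (flipAt i c) k = colOf n c k := by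
  unfold colOf
  split_ifs with h0 h1 h2 <;> try rfl
  have : (⟨k, h2⟩ : Fin n) ≠ i := fun h => hk (by rw [← h])
  simp [flipAt, this]

lemma colOf_flipAt_self {n : ℕ} (i : Fin n) (hi : 2 ≤ (i : ℕ)) (c : Fin n → Bool) :
    colOf n (flipAt i c) i = !colOf n c i := by
  have h0 : (i : ℕ) ≠ 0 := by omega
  have h1 : (i : ℕ) ≠ 1 := by omega
  simp [colOf, h0, h1, flipAt]

lemma gain_flipAt {d n : ℕ} (A : List (Fin d → ℕ) → ℕ) (s : Fin d → Finset ℕ) (i : Fin n)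
    (hi : 2 ≤ (i : ℕ)) (c : Fin n → Bool) :
    gain (colOf n (flipAt i c)) (algAssign d A (vec s (colOf n (flipAt i c)))) i =
      - gain (colOf n c) (algAssign d A (vec s (colOf n c))) i := by
  have hassign : ∀ k ≤ (i : ℕ), algAssign d A (vec s (colOf n (flipAt i c))) k =
      algAssign d A (vec s (colOf n c)) k := fun k hk =>
    algAssign_congr A s _ _ k fun l hl => colOf_flipAt_of_ne i c l (by omega)
  have hE : earlier (algAssign d A (vec s (colOf n (flipAt i c)))) i =
      earlier (algAssign d A (vec s (colOf n c))) i := by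
    unfold earlier
    apply filter_congr
    intro k hk
    rw [hassign k (mem_range.1 hk).le, hassign i le_rfl]
  have hlt : ∀ k ∈ earlier (algAssign d A (vec s (colOf n c))) i, k < i := by
    intro k hk
    exact mem_range.1 (mem_filter.1 hk).1
  unfold gain
  rw [hE]
  generalize earlier (algAssign d A (vec s (colOf n c))) i = X at *
  have hcol : ∀ k ∈ X, colOf n (flipAt i c) k = colOf n c k := fun k hk =>
    colOf_flipAt_of_ne i c k (hlt k hk).ne
  have hM : Mono (colOf n (flipAt i c)) X ↔ Mono (colOf n c) X := by
    unfold Mono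
    refine forall₂_congr fun a ha => forall₂_congr fun b hb => ?_
    rw [hcol a ha, hcol b hb]
  by_cases h : X.Nonempty ∧ Mono (colOf n c) X
  · rw [if_pos h, if_pos (by rwa [hM])]
    obtain ⟨⟨a, ha⟩, hm⟩ := h
    have e1 : (∀ k ∈ X, colOf n c k = colOf n c i) ↔ colOf n c a = colOf n c i :=
      ⟨fun h => h a ha, fun h k hk => (hm k hk a ha).trans h⟩
    have e2 : (∀ k ∈ X, colOf n (flipAt i c) k = colOf n (flipAt i c) i) ↔
        colOf n c a = !colOf n c i := by
      rw [colOf_flipAt_self i hi]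
      exact ⟨fun h => (hcol a ha).symm.trans (h a ha),
        fun h k hk => (hcol k hk).trans ((hm k hk a ha).trans h)⟩
    simp only [e1, e2]
    cases colOf n c a <;> cases colOf n c i <;> simp
  · rw [if_neg h, if_neg (by rwa [hM])]
    simp

/-- For `i ≥ 2` the sum vanishes. Item `0` always opens a bin, and item `1` has gain `0` or `-1`
because its colour differs from that of item `0`. -/
lemma sum_gain_nonpos {d n : ℕ} (A : List (Fin d → ℕ) → ℕ) (s : Fin d → Finset ℕ) (i : Fin n) :
    ∑ c : Fin n → Bool, gain (colOf n c) (algAssign d A (vec s (colOf n c))) i ≤ 0 := by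
  by_cases hi : 2 ≤ (i : ℕ)
  · have h1 := Equiv.sum_comp (flipAt_involutive i).toPerm
      (fun c => gain (colOf n c) (algAssign d A (vec s (colOf n c))) i)
    simp only [Function.Involutive.coe_toPerm, gain_flipAt A s i hi, sum_neg_distrib] at h1
    omega
  · apply sum_nonpos
    intro c _
    unfold gain
    split_ifs with h1 h2
    · exfalso
      obtain ⟨⟨k, hk⟩, -⟩ := h1
      have hki := mem_range.1 (mem_filter.1 hk).1
      have h3 := h2 k hk
      have hk0 : k = 0 := by omega
      have hi1 : (i : ℕ) = 1 := by omega
      rw [hk0, hi1] at h3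
      simp [colOf] at h3
    · simp
    · simp

/-- The expected number of bins of a deterministic algorithm on the random instance is at least
`n / (B + 1)`. -/
lemma average_bound {d : ℕ} (B n : ℕ) (hB : 2 ≤ B) (A : List (Fin d → ℕ) → ℕ)
    (hA : ValidAlg d B A) (s : Fin d → Finset ℕ)
    (hsurj : ∀ T ∈ powersetCard (B + 1) (range n), ∃ r, s r = T) :
    ∑ _c : Fin n → Bool, (n : ℝ) ≤
      (B + 1) * ∑ c : Fin n → Bool, (algBins d n A (vec s (colOf n c)) : ℝ) := by
  have h : ∑ _c : Fin n → Bool, (n : ℤ) ≤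
      (B + 1) * ∑ c : Fin n → Bool, (algBins d n A (vec s (colOf n c)) : ℤ) := by
    calc ∑ _c : Fin n → Bool, (n : ℤ) ≤ ∑ c : Fin n → Bool,
          ((B + 1) * (algBins d n A (vec s (colOf n c)) : ℤ) +
            ∑ i ∈ range n, gain (colOf n c) (algAssign d A (vec s (colOf n c))) i) :=
          sum_le_sum fun c _ => total_bound B hB (colOf n c) _ n
            (valid_mono B n A hA s hsurj (colOf n c))
      _ ≤ _ := by
          rw [sum_add_distrib, ← mul_sum, sum_comm]
          have : ∑ i ∈ range n, ∑ c : Fin n → Bool,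
              gain (colOf n c) (algAssign d A (vec s (colOf n c))) i ≤ 0 :=
            sum_nonpos fun i hi => sum_gain_nonpos A s ⟨i, mem_range.1 hi⟩
          omega
  exact_mod_cast h

/-! ### The number of items -/

lemma exists_size (B d : ℕ) (hd : 1 ≤ d) :
    ∃ n, B + 1 ≤ n ∧ n.choose (B + 1) ≤ d ∧
      ((Nat.factorial (B + 1) * d : ℝ)) ^ ((1 : ℝ) / (B + 1)) < n + 1 := by
  have hex : ∃ m : ℕ, d < m.choose (B + 1) := by
    refine ⟨d + B + 1, ?_⟩
    clear hd
    induction d with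
    | zero => simp
    | succ d ih =>
      rw [show d + 1 + B + 1 = (d + B + 1) + 1 by ring, Nat.choose_succ_succ']
      have := Nat.choose_pos (show B ≤ d + B + 1 by omega)
      omega
  classical
  have hspec := Nat.find_spec hex
  have hmin := fun k => Nat.find_min hex (m := k)
  generalize Nat.find hex = m at hspec hmin
  have hm : B + 2 ≤ m := by
    by_contra! hlt
    have h1 : m.choose (B + 1) ≤ (B + 1).choose (B + 1) := Nat.choose_le_choose _ (by omega)
    rw [Nat.choose_self] at h1
    omega
  obtain ⟨n, rfl⟩ : ∃ n, m = n + 1 := ⟨m - 1, by omega⟩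
  refine ⟨n, by omega, not_lt.1 (hmin n (by omega)), ?_⟩
  have h2 : (B + 1).factorial * d < (n + 1) ^ (B + 1) :=
    calc (B + 1).factorial * d < (B + 1).factorial * (n + 1).choose (B + 1) :=
          Nat.mul_lt_mul_of_pos_left hspec (Nat.factorial_pos _)
      _ = (n + 1).descFactorial (B + 1) := (Nat.descFactorial_eq_factorial_mul_choose _ _).symm
      _ ≤ (n + 1) ^ (B + 1) := Nat.descFactorial_le_pow _ _
  have h3 : ((B + 1).factorial * d : ℝ) < ((n : ℝ) + 1) ^ (B + 1) := by exact_mod_cast h2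
  calc ((B + 1).factorial * d : ℝ) ^ ((1 : ℝ) / (B + 1))
      < (((n : ℝ) + 1) ^ (B + 1)) ^ ((1 : ℝ) / (B + 1)) :=
        Real.rpow_lt_rpow (by positivity) h3 (by positivity)
    _ = n + 1 := by
        rw [← Real.rpow_natCast, ← Real.rpow_mul (by positivity)]
        push_cast
        rw [mul_one_div_cancel (by positivity), Real.rpow_one]

/-- The `(B+1)`-subsets of the items label the coordinates, possibly with repetitions. -/
lemma exists_labels (B n d : ℕ) (hn : B + 1 ≤ n) (hc : n.choose (B + 1) ≤ d) :
    ∃ s : Fin d → Finset ℕ, (∀ r, s r ∈ powersetCard (B + 1) (range n)) ∧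
      ∀ T ∈ powersetCard (B + 1) (range n), ∃ r, s r = T := by
  have hne : Nonempty (powersetCard (B + 1) (range n)) :=
    (powersetCard_nonempty.2 (by simpa using hn)).to_subtype
  obtain ⟨e⟩ : Nonempty (powersetCard (B + 1) (range n) ↪ Fin d) :=
    Function.Embedding.nonempty_of_card_le (by simpa using hc)
  refine ⟨fun r => (Function.invFun e r).1, fun r => (Function.invFun e r).2, fun T hT => ?_⟩
  obtain ⟨r, hr⟩ := Function.invFun_surjective e.injective ⟨T, hT⟩
  exact ⟨r, congrArg Subtype.val hr⟩

end

/-- Randomized lower bound, B ≥ 2: for all large enough d and every valid randomized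
online algorithm, there is an instance with OPT = 2 on which the expected number of bins,
divided by OPT, exceeds (((B+1)!·d)^{1/(B+1)} − 1)/(4(B+1)). -/
theorem randomized_lower_bound_B_ge_two (B : ℕ) (hB : 2 ≤ B) :
    ∃ d₀ : ℕ, ∀ d : ℕ, d₀ ≤ d →
      ∀ (Ω : Type) [Fintype Ω] (μ : Ω → ℝ), (∀ ω, 0 ≤ μ ω) → (∑ ω, μ ω) = 1 →
      ∀ A : Ω → (List (Fin d → ℕ) → ℕ), (∀ ω, ValidAlg d B (A ω)) →
      ∃ n : ℕ, ∃ v : ℕ → Fin d → ℕ, (∀ i, ∀ r : Fin d, v i r ≤ 1) ∧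
        vbpOPT d B n v = 2 ∧
        (((Nat.factorial (B + 1) * d : ℝ)) ^ ((1 : ℝ) / (B + 1)) - 1) / (4 * (B + 1))
          < (∑ ω, μ ω * (algBins d n (A ω) v : ℝ)) / (vbpOPT d B n v : ℝ) := by
  refine ⟨1, fun d hd Ω _ μ hμ hμ1 A hA => ?_⟩
  obtain ⟨n, hn, hc, hx⟩ := exists_size B d hd
  obtain ⟨s, hs, hsurj⟩ := exists_labels B n d hn hc
  -- Average over the colourings and over `Ω` at once, and pick a colouring that is not below average.
  have havg : ∑ _c : Fin n → Bool, (n : ℝ) ≤ ∑ c : Fin n → Bool,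
      (B + 1) * ∑ ω, μ ω * (algBins d n (A ω) (vec s (colOf n c)) : ℝ) := by
    calc ∑ _c : Fin n → Bool, (n : ℝ) = ∑ ω, μ ω * ∑ _c : Fin n → Bool, (n : ℝ) := by
          rw [← Finset.sum_mul, hμ1, one_mul]
      _ ≤ ∑ ω, μ ω * ((B + 1) *
            ∑ c : Fin n → Bool, (algBins d n (A ω) (vec s (colOf n c)) : ℝ)) :=
          Finset.sum_le_sum fun ω _ =>
            mul_le_mul_of_nonneg_left (average_bound B n hB (A ω) (hA ω) s hsurj) (hμ ω)
      _ = _ := by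
          simp only [Finset.mul_sum]
          rw [Finset.sum_comm]
          refine Finset.sum_congr rfl fun c _ => Finset.sum_congr rfl fun ω _ => by ring
  obtain ⟨c, -, hc⟩ := Finset.exists_le_of_sum_le Finset.univ_nonempty havg
  refine ⟨n, vec s (colOf n c), vec_le_one s _, opt_eq_two B n hB hn s hs hsurj c, ?_⟩
  rw [opt_eq_two B n hB hn s hs hsurj c]
  have hn0 : (0 : ℝ) < n := by exact_mod_cast (show 0 < n by omega)
  have hB0 : (0 : ℝ) < (B : ℝ) + 1 := by positivity
  rw [div_lt_iff₀ (by positivity)]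
  push_cast
  linarith
end

section
/- Let p ≥ 1 and let C = {c₁, …, c_q} be a finite set of size q with a fixed enumeration c₁, …, c_q. Then every (p, C)-diverse multi-family of subsets of C is also (p, C)-starry. -/
/-!
List the members of `G i` as `T i 0, T i 1, …`. For each fixed `k` the sets `T 0 k, T 1 k, …`
have sizes at least `1, 2, …, q`, so by Hall's theorem (`exists_injective_of_lt_card`) they have a
system of distinct representatives; its representatives are pairwise distinct elements of a set of
size `q`, hence it uses every `c x` exactly once. Put `T i k` into the class of its representative.
Each of the first `p` layers `k < p` is complete, so it contributes one member to every class.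
A layer `k ≥ p` may be incomplete; missing sets are replaced by the whole ground set, which keeps
Hall's condition true and places the remaining members as well.
-/

/-- A family of sets in which the `i`-th one (counting from `0`) has more than `i` elements has
distinct representatives: a subfamily of size `m` contains a set of index at least `m - 1`. -/
lemma exists_injective_of_lt_card {q : ℕ} (t : Fin q → Finset (Fin q))
    (ht : ∀ i : Fin q, (i : ℕ) < (t i).card) :
    ∃ e : Fin q → Fin q, Function.Injective e ∧ ∀ i, e i ∈ t i := by
  refine (Finset.all_card_le_biUnion_card_iff_exists_injective t).1 fun s => ?_
  rcases s.eq_empty_or_nonempty with rfl | hs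
  · simp
  · have hsub : s ⊆ Finset.Iic (s.max' hs) := fun x hx => Finset.mem_Iic.2 (s.le_max' x hx)
    have h1 := Finset.card_le_card hsub
    rw [Fin.card_Iic] at h1
    have h2 := Finset.card_le_card (Finset.subset_biUnion_of_mem t (s.max'_mem hs))
    have h3 := ht (s.max' hs)
    omega

/-- Every (p,C)-diverse multi-family on a finite set C = {c₁,…,c_q} (given by an injective
enumeration `c : Fin q → α`) is also (p,C)-starry. A multi-family is a finite multiset of
subsets of C. Diverse: it splits as a multiset sum F₁ + ⋯ + F_q where each F_i has at least
p members, every member of F_i having cardinality ≥ i. Starry: it splits as a multiset sum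
F₁ + ⋯ + F_q where each F_i has at least p members, every member of F_i containing c_i. -/
theorem diverse_implies_starry (α : Type) [DecidableEq α] (q p : ℕ) (hp : 1 ≤ p)
    (c : Fin q → α) (hc : Function.Injective c)
    (F : Multiset (Finset α)) (hF : ∀ T ∈ F, T ⊆ Finset.image c Finset.univ)
    (hdiverse : ∃ G : Fin q → Multiset (Finset α), F = ∑ i, G i ∧
      ∀ i : Fin q, p ≤ Multiset.card (G i) ∧ ∀ T ∈ G i, (i : ℕ) + 1 ≤ T.card) :
    ∃ G : Fin q → Multiset (Finset α), F = ∑ i, G i ∧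
      ∀ i : Fin q, p ≤ Multiset.card (G i) ∧ ∀ T ∈ G i, c i ∈ T := by
  classical
  obtain ⟨G, rfl, hG⟩ := hdiverse
  let L : Fin q → List (Finset α) := fun i => (G i).toList
  have hL : ∀ i (k : Fin (L i).length), (L i)[k] ∈ G i := fun i k =>
    Multiset.mem_toList.1 (List.getElem_mem k.2)
  have hlen : ∀ i, p ≤ (L i).length := fun i => by
    simpa [L] using (hG i).1
  have hlayer : ∀ k : ℕ, ∃ e : Fin q → Fin q, Function.Injective e ∧
      ∀ i, ∀ h : k < (L i).length, c (e i) ∈ (L i)[k] := by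
    intro k
    obtain ⟨e, he, hmem⟩ := exists_injective_of_lt_card
      (fun i => Finset.univ.filter fun x => ∀ h : k < (L i).length, c x ∈ (L i)[k]) (by
        intro i
        by_cases h : k < (L i).length
        · have hTG : (L i)[k] ∈ G i := hL i ⟨k, h⟩
          have hcard := (hG i).2 _ hTG
          have hsub := hF _ (Multiset.mem_sum.2 ⟨i, Finset.mem_univ i, hTG⟩)
          have himg : (L i)[k] ⊆ (Finset.univ.filter fun x =>
              ∀ h : k < (L i).length, c x ∈ (L i)[k]).image c := by
            intro y hy
            obtain ⟨x, -, rfl⟩ := Finset.mem_image.1 (hsub hy)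
            exact Finset.mem_image_of_mem c (by simpa using fun _ => hy)
          have := (Finset.card_le_card himg).trans Finset.card_image_le
          omega
        · simp [h])
    exact ⟨e, he, fun i h => (Finset.mem_filter.1 (hmem i)).2 h⟩
  choose e he hmem using hlayer
  have hsplit : ∀ i, G i = ∑ k : Fin (L i).length, {(L i)[k]} := by
    intro i
    have h := Fin.sum_univ_fun_getElem (L i) (fun T => ({T} : Multiset (Finset α)))
    refine Eq.trans ?_ h.symm
    rw [← Multiset.sum_coe, ← Multiset.map_coe, Multiset.sum_map_singleton]
    exact (Multiset.coe_toList (G i)).symm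
  refine ⟨fun x => ∑ i, ∑ k : Fin (L i).length, if e k i = x then {(L i)[k]} else 0, ?_, ?_⟩
  · rw [Finset.sum_comm]
    refine Finset.sum_congr rfl fun i _ => ?_
    rw [Finset.sum_comm]
    refine (hsplit i).trans ?_
    exact Finset.sum_congr rfl fun k _ => by simp
  · intro x
    constructor
    · -- In layer `j < p`, the injective map `e j` is onto, so exactly one member goes to class `x`.
      have hone : ∀ j : Fin p, ∃ i, e j i = x := fun j =>
        Finite.surjective_of_injective (he j) x
      choose g hg using hone
      have hinj : Function.Injective (fun j : Fin p =>
          (⟨g j, ⟨j, j.2.trans_le (hlen (g j))⟩⟩ : Σ i, Fin (L i).length)) := by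
        intro a b hab
        have := congrArg (fun s : Σ i, Fin (L i).length => (s.2 : ℕ)) hab
        exact Fin.ext this
      beta_reduce
      rw [← Fintype.sum_sigma' (fun i (k : Fin (L i).length) =>
        if e k i = x then ({(L i)[k]} : Multiset (Finset α)) else 0), Multiset.card_sum]
      calc p = ∑ j : Fin p, 1 := by simp
        _ = ∑ s ∈ Finset.univ.map ⟨_, hinj⟩, Multiset.card
            (if e s.2 s.1 = x then ({(L s.1)[s.2]} : Multiset (Finset α)) else 0) := by
          rw [Finset.sum_map]
          exact Finset.sum_congr rfl fun j _ => by simp [hg j]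
        _ ≤ _ := Finset.sum_le_sum_of_subset (Finset.subset_univ _)
    · intro T hT
      obtain ⟨i, -, hT⟩ := Multiset.mem_sum.1 hT
      obtain ⟨k, -, hT⟩ := Multiset.mem_sum.1 hT
      split_ifs at hT with h
      · rw [Multiset.mem_singleton.1 hT, ← h]
        exact hmem k i k.2
      · simp at hT
end

section
/- Fix integers k ≥ 2 and m ≥ 1. Let A be any deterministic online coloring algorithm for k-uniform hypergraphs in the vertex-arrival model that produces a proper coloring on every presented k-uniform hypergraph all of whose prefixes induce hyperforests. Then there exist n ≤ k^{m−1} and a k-uniform hypertree H on vertex set {0,1,…,n−1} (vertices presented in the natural order, each prefix inducing a hyperforest) such that the coloring produced by A on H uses at least m distinct colors. -/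
/-!
The adversary builds, for every `p` and on top of any hyperforest already presented, a hypertree
on `k ^ p` fresh consecutive vertices that receives at least `p + 1` colors (`exists_block`).

By strong induction on `p`, it first presents `p * (k - 1)` disjoint hypertrees, the `i`-th being
a block of level `i / (k - 1)`, hence with `k ^ (i / (k - 1))` vertices and at least
`i / (k - 1) + 1` colors. A representative is chosen greedily in each so that no color is used by
more than `k - 1` representatives: before the `i`-th choice only `i < (i / (k - 1) + 1) * (k - 1)`
representatives have been chosen, so not all colors of the `i`-th hypertree are exhausted
(`exists_components`). Together these use `k ^ p - 1` vertices. One more vertex `v` is presented,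
and the representatives are grouped into `p` classes of size `k - 1`, each class together with `v`
being a new edge; this keeps the hypergraph acyclic and makes the new part connected.

If the representatives have at least `p + 1` colors, the grouping is arbitrary. Otherwise they
have exactly `p` colors, each used exactly `k - 1` times; grouping by color forces `v` to avoid
all `p` of them.

Acyclicity is propagated by `Hyperforest.insert`: an edge may be added whenever some labelling of
the vertices is constant on the old edges and injective on the new one.
-/

/-- The edges of `E` revealed by the time vertex `i` arrives
(vertices arrive in the natural order 0, 1, 2, …). -/
def prefixEdges (E : Finset (Finset ℕ)) (i : ℕ) : Finset (Finset ℕ) :=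
  E.filter (fun e => e ⊆ Finset.range (i + 1))

/-- A hypergraph with edge set `E` has a cycle: a sequence v₁ e₁ v₂ e₂ ⋯ v_t e_t v_{t+1}
with t ≥ 2, {v_i, v_{i+1}} ⊆ e_i for all i, all edges distinct, all vertices v₁,…,v_t
distinct, and v_{t+1} = v₁. -/
def HasHyperCycle (E : Finset (Finset ℕ)) : Prop :=
  ∃ t : ℕ, 2 ≤ t ∧ ∃ v : ℕ → ℕ, ∃ e : ℕ → Finset ℕ,
    (∀ i < t, e i ∈ E) ∧
    (∀ i < t, v i ∈ e i ∧ v (i + 1) ∈ e i) ∧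
    (∀ i < t, ∀ j < t, i ≠ j → e i ≠ e j) ∧
    (∀ i < t, ∀ j < t, i ≠ j → v i ≠ v j) ∧
    v t = v 0

/-- A hyperforest is a hypergraph with no cycle. -/
def Hyperforest (E : Finset (Finset ℕ)) : Prop := ¬ HasHyperCycle E

/-- Connectivity of a hypergraph on vertex set {0,…,n−1}: any two vertices are joined
by a walk, consecutive vertices of which lie in a common edge. -/
def HyperConnected (n : ℕ) (E : Finset (Finset ℕ)) : Prop :=
  ∀ u < n, ∀ w < n, Relation.ReflTransGen (fun a b => ∃ e ∈ E, a ∈ e ∧ b ∈ e) u w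

/-- A hypertree on vertex set {0,…,n−1} is a connected hyperforest. -/
def Hypertree (n : ℕ) (E : Finset (Finset ℕ)) : Prop :=
  Hyperforest E ∧ HyperConnected n E

/-- The color that the online algorithm `A` (a function of the arriving vertex and the
set of edges revealed so far) assigns to vertex `i` when presented the hypergraph `E`. -/
def onlineColor (A : ℕ → Finset (Finset ℕ) → ℕ) (E : Finset (Finset ℕ)) (i : ℕ) : ℕ :=
  A i (prefixEdges E i)

/-- The coloring produced by `A` on the hypergraph with edge set `E` is proper:
no edge is monochromatic. -/
def ProperOn (A : ℕ → Finset (Finset ℕ) → ℕ) (E : Finset (Finset ℕ)) : Prop :=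
  ∀ e ∈ E, ∃ u ∈ e, ∃ w ∈ e, onlineColor A E u ≠ onlineColor A E w

/-! ### Cycles and connectivity -/

/-- Reachability in the hypergraph with edge set `E`. -/
def Conn (E : Finset (Finset ℕ)) : ℕ → ℕ → Prop :=
  Relation.ReflTransGen (fun a b => ∃ e ∈ E, a ∈ e ∧ b ∈ e)

theorem Conn.symm {E : Finset (Finset ℕ)} {x y : ℕ} (h : Conn E x y) : Conn E y x := by
  induction h with
  | refl => exact Relation.ReflTransGen.refl
  | tail _ h ih =>
    obtain ⟨e, he, h1, h2⟩ := h
    exact Relation.ReflTransGen.head ⟨e, he, h2, h1⟩ ih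

theorem Conn.mono {E E' : Finset (Finset ℕ)} (hE : E ⊆ E') {x y : ℕ} (h : Conn E x y) :
    Conn E' x y :=
  Relation.ReflTransGen.mono (fun _ _ ⟨e, he, h⟩ => ⟨e, hE he, h⟩) _ _ h

theorem Conn.single {E : Finset (Finset ℕ)} {e : Finset ℕ} (he : e ∈ E) {x y : ℕ}
    (hx : x ∈ e) (hy : y ∈ e) : Conn E x y :=
  Relation.ReflTransGen.single ⟨e, he, hx, hy⟩

theorem Hyperforest.mono {E E' : Finset (Finset ℕ)} (hE : E ⊆ E') (h : Hyperforest E') :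
    Hyperforest E := by
  rintro ⟨t, ht, v, e, h1, h2⟩
  exact h ⟨t, ht, v, e, fun i hi => hE (h1 i hi), h2⟩

/-- A cycle through the new edge `e` would, after removing `e`, join two distinct vertices of `e`
by old edges, on which the labelling `L` is constant. -/
theorem Hyperforest.insert {E : Finset (Finset ℕ)} (hE : Hyperforest E) (e : Finset ℕ)
    (L : ℕ → ℕ) (hL : ∀ f ∈ E, ∀ x ∈ f, ∀ y ∈ f, L x = L y)
    (he : ∀ x ∈ e, ∀ y ∈ e, L x = L y → x = y) : Hyperforest (insert e E) := by
  rintro ⟨t, ht, v, c, h1, h2, h3, h4, h5⟩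
  by_cases hc : ∃ i < t, c i = e
  · obtain ⟨i, hi, rfl⟩ := hc
    have step : ∀ j < t, j ≠ i → L (v j) = L (v (j + 1)) := fun j hj hji => by
      rcases Finset.mem_insert.1 (h1 j hj) with h | h
      · exact absurd h (h3 j hj i hi hji)
      · exact hL _ h _ (h2 j hj).1 _ (h2 j hj).2
    have first : ∀ j ≤ i, L (v 0) = L (v j) := by
      intro j
      induction j with
      | zero => simp
      | succ j ih => exact fun hj => (ih (by omega)).trans (step j (by omega) (by omega))
    have last : ∀ d, i + 1 + d ≤ t → L (v (i + 1)) = L (v (i + 1 + d)) := by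
      intro d
      induction d with
      | zero => simp
      | succ d ih =>
        exact fun hj => (ih (by omega)).trans (step (i + 1 + d) (by omega) (by omega))
    have hl := last (t - (i + 1)) (by omega)
    rw [show i + 1 + (t - (i + 1)) = t by omega, h5, first i le_rfl] at hl
    have heq := he _ (h2 i hi).2 _ (h2 i hi).1 hl
    by_cases hit : i + 1 < t
    · exact h4 _ hit _ hi (by omega) heq
    · rw [show i + 1 = t by omega, h5] at heq
      exact h4 0 (by omega) i hi (by omega) heq
  · push Not at hc
    exact hE ⟨t, ht, v, c, fun i hi => (Finset.mem_insert.1 (h1 i hi)).resolve_left (hc i hi),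
      h2, h3, h4, h5⟩

/-- Colors of vertices below `b` do not change when all new edges contain a vertex `≥ b`. -/
theorem onlineColor_eq (A : ℕ → Finset (Finset ℕ) → ℕ) {E E' : Finset (Finset ℕ)} {b : ℕ}
    (hE : E ⊆ E') (hnew : ∀ e ∈ E', e ∈ E ∨ ∃ x ∈ e, b ≤ x) {i : ℕ} (hi : i < b) :
    onlineColor A E' i = onlineColor A E i := by
  unfold onlineColor
  congr 1
  ext e
  simp only [prefixEdges, Finset.mem_filter]
  constructor
  · rintro ⟨h1, h2⟩
    refine ⟨(hnew e h1).resolve_right ?_, h2⟩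
    rintro ⟨x, hx, hbx⟩
    have := Finset.mem_range.1 (h2 hx)
    omega
  · exact fun ⟨h1, h2⟩ => ⟨hE h1, h2⟩

/-- `E` is a `k`-uniform hyperforest on the vertex set `{0, …, n - 1}`. -/
def Good (k n : ℕ) (E : Finset (Finset ℕ)) : Prop :=
  (∀ e ∈ E, e ⊆ Finset.range n ∧ e.card = k) ∧ Hyperforest E

/-- `E` arises from `E₀` by adding a `k`-uniform hypertree on the fresh vertices `{a, …, b - 1}`,
to which `A` assigns at least `c` colors. -/
def Block (A : ℕ → Finset (Finset ℕ) → ℕ) (k a b c : ℕ) (E₀ E : Finset (Finset ℕ)) : Prop :=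
  Good k b E ∧ E₀ ⊆ E ∧ (∀ e ∈ E, e ∈ E₀ ∨ e ⊆ Finset.Ico a b) ∧
  (∀ x ∈ Finset.Ico a b, ∀ y ∈ Finset.Ico a b, Conn E x y) ∧
  c ≤ ((Finset.Ico a b).image (onlineColor A E)).card

/-- `E` arises from `E₀` by adding `t` disjoint hypertrees covering the fresh vertices
`{a, …, b - 1}`. The `i`-th one is labelled `i` by `L` and has representative `r i`; all other
vertices are labelled `t`. No color is shared by `k` representatives. -/
structure Components (A : ℕ → Finset (Finset ℕ) → ℕ) (k a b t : ℕ) (E₀ E : Finset (Finset ℕ))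
    (L r : ℕ → ℕ) : Prop where
  good : Good k b E
  sub : E₀ ⊆ E
  new : ∀ e ∈ E, e ∈ E₀ ∨ e ⊆ Finset.Ico a b
  label_const : ∀ e ∈ E, ∀ x ∈ e, ∀ y ∈ e, L x = L y
  label_out : ∀ x, x ∉ Finset.Ico a b → L x = t
  rep_mem : ∀ i < t, r i ∈ Finset.Ico a b
  rep_label : ∀ i < t, L (r i) = i
  conn : ∀ x ∈ Finset.Ico a b, ∃ i < t, Conn E x (r i)
  fiber : ∀ c, ((Finset.range t).filter (fun i => onlineColor A E (r i) = c)).card ≤ k - 1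

/-! ### Presenting disjoint hypertrees with well-chosen representatives -/

theorem Components.step {A : ℕ → Finset (Finset ℕ) → ℕ} {k a b b' t : ℕ} (hk : 2 ≤ k)
    {E₀ E E' : Finset (Finset ℕ)} {L r : ℕ → ℕ} (hE₀ : Good k a E₀) (hab : a ≤ b) (hbb : b ≤ b')
    (h : Components A k a b t E₀ E L r) (hB : Block A k b b' (t / (k - 1) + 1) E E') :
    ∃ L' r', Components A k a b' (t + 1) E₀ E' L' r' := by
  obtain ⟨hg, hsub, hnew, hconn, hcard⟩ := hB
  have hcol : ∀ i < b, onlineColor A E' i = onlineColor A E i := by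
    intro i hi
    refine onlineColor_eq A hsub (fun e he => (hnew e he).imp_right fun hs => ?_) hi
    have : 0 < e.card := by rw [(hg.1 e he).2]; omega
    obtain ⟨x, hx⟩ := Finset.card_pos.1 this
    exact ⟨x, hx, (Finset.mem_Ico.1 (hs hx)).1⟩
  have hrb : ∀ i < t, r i < b := fun i hi => (Finset.mem_Ico.1 (h.rep_mem i hi)).2
  have hfib : ∀ c, ((Finset.range t).filter (fun i => onlineColor A E' (r i) = c)).card ≤ k - 1 := by
    intro c
    rw [Finset.filter_congr (q := fun i => onlineColor A E (r i) = c)]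
    · exact h.fiber c
    · intro i hi
      rw [hcol _ (hrb i (Finset.mem_range.1 hi))]
  -- Some color of the new block is used by fewer than `k - 1` of the old representatives.
  obtain ⟨x, hx, hxc⟩ : ∃ x ∈ Finset.Ico b b', ((Finset.range t).filter
      (fun i => onlineColor A E' (r i) = onlineColor A E' x)).card < k - 1 := by
    by_contra! hcon
    have h1 : ((Finset.Ico b b').image (onlineColor A E')).card * (k - 1) ≤ t := by
      calc _ ≤ ∑ c ∈ (Finset.Ico b b').image (onlineColor A E'),
            ((Finset.range t).filter (fun i => onlineColor A E' (r i) = c)).card := by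
            rw [← smul_eq_mul]
            refine Finset.card_nsmul_le_sum _ _ _ fun c hc => ?_
            obtain ⟨x, hx, rfl⟩ := Finset.mem_image.1 hc
            exact hcon x hx
        _ ≤ (Finset.range t).card := by
            rw [Finset.sum_card_fiberwise_eq_card_filter]
            exact Finset.card_filter_le _ _
        _ = t := Finset.card_range t
    have h2 := Nat.mul_le_mul_right (k - 1) hcard
    have h3 : t < (t / (k - 1) + 1) * (k - 1) := by
      have := Nat.lt_mul_div_succ t (show 0 < k - 1 by omega)
      rwa [mul_comm]
    omega
  obtain ⟨hx1, hx2⟩ := Finset.mem_Ico.1 hx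
  refine ⟨fun y => if b ≤ y ∧ y < b' then t else if a ≤ y ∧ y < b then L y else t + 1,
    fun i => if i = t then x else r i, ?_⟩
  constructor
  · exact hg
  · exact h.sub.trans hsub
  · intro e he
    rcases hnew e he with he | he
    · rcases h.new e he with he | he
      · exact .inl he
      · exact .inr (he.trans (Finset.Ico_subset_Ico le_rfl hbb))
    · exact .inr (he.trans (Finset.Ico_subset_Ico hab le_rfl))
  · intro e he y hy z hz
    rcases hnew e he with he | he
    · rcases h.new e he with he' | he'
      · have h1 := Finset.mem_range.1 ((hE₀.1 e he').1 hy)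
        have h2 := Finset.mem_range.1 ((hE₀.1 e he').1 hz)
        grind
      · have h1 := Finset.mem_Ico.1 (he' hy)
        have h2 := Finset.mem_Ico.1 (he' hz)
        have h3 := h.label_const e he y hy z hz
        grind
    · have h1 := Finset.mem_Ico.1 (he hy)
      have h2 := Finset.mem_Ico.1 (he hz)
      grind
  · intro y hy
    rw [Finset.mem_Ico] at hy
    grind
  · intro i hi
    by_cases hit : i = t
    · simp only [hit, if_true, Finset.mem_Ico]; omega
    · have := Finset.mem_Ico.1 (h.rep_mem i (by omega))
      simp only [hit, if_false, Finset.mem_Ico]; omega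
  · intro i hi
    by_cases hit : i = t
    · simp [hit, hx1, hx2]
    · have h1 := Finset.mem_Ico.1 (h.rep_mem i (by omega))
      have h2 := h.rep_label i (by omega)
      grind
  · intro y hy
    by_cases hyb : b ≤ y
    · exact ⟨t, by omega, by
        simpa using hconn y (Finset.mem_Ico.2 ⟨hyb, (Finset.mem_Ico.1 hy).2⟩) x hx⟩
    · obtain ⟨i, hi, hc⟩ := h.conn y
        (Finset.mem_Ico.2 ⟨(Finset.mem_Ico.1 hy).1, by omega⟩)
      exact ⟨i, by omega, by simpa [show i ≠ t by omega] using hc.mono hsub⟩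
  · intro c
    have hold : (Finset.range t).filter
        (fun i => onlineColor A E' (if i = t then x else r i) = c) =
        (Finset.range t).filter (fun i => onlineColor A E' (r i) = c) := by
      refine Finset.filter_congr fun i hi => ?_
      rw [if_neg (Finset.mem_range.1 hi).ne]
    rw [Finset.range_add_one, Finset.filter_insert, hold]
    simp only [if_true]
    split_ifs with hc
    · subst hc
      exact (Finset.card_insert_le _ _).trans hxc
    · exact hfib c

theorem exists_components {A : ℕ → Finset (Finset ℕ) → ℕ} {k p a : ℕ} (hk : 2 ≤ k)
    {E₀ : Finset (Finset ℕ)} (hE₀ : Good k a E₀)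
    (ih : ∀ q < p, ∀ a E₀, Good k a E₀ → ∃ E, Block A k a (a + k ^ q) (q + 1) E₀ E) :
    ∀ t ≤ p * (k - 1), ∃ E L r,
      Components A k a (a + ∑ i ∈ Finset.range t, k ^ (i / (k - 1))) t E₀ E L r := by
  intro t
  induction t with
  | zero =>
    intro _
    exact ⟨E₀, fun _ => 0, fun _ => 0, by simpa using hE₀, subset_rfl, fun e he => .inl he,
      by simp, by simp, by simp, by simp, by simp, by simp⟩
  | succ t iht =>
    intro ht
    obtain ⟨E, L, r, h⟩ := iht (by omega)
    have hq : t / (k - 1) < p := (Nat.div_lt_iff_lt_mul (by omega)).2 (by omega)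
    obtain ⟨E', hB⟩ := ih _ hq _ E h.good
    rw [Finset.sum_range_succ, ← add_assoc]
    exact ⟨E', h.step hk hE₀ (by omega) (by omega) hB⟩

theorem sum_sizes (k p : ℕ) (hk : 2 ≤ k) :
    ∑ i ∈ Finset.range (p * (k - 1)), k ^ (i / (k - 1)) + 1 = k ^ p := by
  induction p with
  | zero => simp
  | succ p ih =>
    rw [add_mul, one_mul, Finset.sum_range_add]
    have : ∀ i ∈ Finset.range (k - 1), k ^ ((p * (k - 1) + i) / (k - 1)) = k ^ p := by
      intro i hi
      rw [mul_comm, Nat.mul_add_div (by omega), Nat.div_eq_of_lt (Finset.mem_range.1 hi), add_zero]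
    rw [Finset.sum_congr rfl this, Finset.sum_const, Finset.card_range, smul_eq_mul, pow_succ]
    obtain ⟨l, rfl⟩ : ∃ l, k = l + 1 := ⟨k - 1, by omega⟩
    simp only [Nat.add_sub_cancel] at *
    linarith

/-! ### Joining the hypertrees by a new vertex -/

/-- The new edge with apex `b` formed from the representatives of the class `c` of the
grouping `g`. -/
def starEdge (b t : ℕ) (r g : ℕ → ℕ) (c : ℕ) : Finset ℕ :=
  insert b (((Finset.range t).filter (fun i => g i = c)).image r)

theorem mem_starEdge {b t : ℕ} {r g : ℕ → ℕ} {c x : ℕ} :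
    x ∈ starEdge b t r g c ↔ x = b ∨ ∃ i < t, g i = c ∧ r i = x := by
  simp [starEdge, and_assoc]

theorem Components.star_forest {A : ℕ → Finset (Finset ℕ) → ℕ} {k a b t : ℕ}
    {E₀ E : Finset (Finset ℕ)} {L r : ℕ → ℕ} (h : Components A k a b t E₀ E L r) (g : ℕ → ℕ)
    (J : Finset ℕ) : Hyperforest (E ∪ J.image (starEdge b t r g)) := by
  induction J using Finset.induction_on with
  | empty => simpa using h.good.2
  | insert c J hc ih =>
    rw [Finset.image_insert, Finset.union_insert]
    have hLb : L b = t := h.label_out b (by simp)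
    -- Hypertrees already joined to the apex get the label `t` of the apex.
    refine ih.insert _ (fun x => if L x < t ∧ g (L x) ∈ J then t else L x) ?_ ?_
    · intro e he
      rcases Finset.mem_union.1 he with he | he
      · intro x hx y hy
        simp only [h.label_const e he x hx y hy]
      · obtain ⟨d, hd, rfl⟩ := Finset.mem_image.1 he
        have key : ∀ x ∈ starEdge b t r g d,
            (if L x < t ∧ g (L x) ∈ J then t else L x) = t := by
          intro x hx
          rcases mem_starEdge.1 hx with rfl | ⟨i, hi, hgi, rfl⟩
          · simp [hLb]
          · rw [h.rep_label i hi, hgi]; simp [hi, hd]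
        intro x hx y hy
        exact (key x hx).trans (key y hy).symm
    · intro x hx y hy hxy
      rcases mem_starEdge.1 hx with rfl | ⟨i, hi, hgi, rfl⟩ <;>
      rcases mem_starEdge.1 hy with rfl | ⟨j, hj, hgj, rfl⟩
      · rfl
      · simp [h.rep_label j hj, hgj, hc, hLb] at hxy; omega
      · simp [h.rep_label i hi, hgi, hc, hLb] at hxy; omega
      · simp [h.rep_label i hi, hgi, hc, h.rep_label j hj, hgj] at hxy
        rw [hxy]

/-- Joining the components by an apex `b`, along a grouping `g` into classes of size `k - 1`. -/
theorem Components.star {A : ℕ → Finset (Finset ℕ) → ℕ} {k a b t : ℕ} (hk : 2 ≤ k) (hab : a ≤ b)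
    {E₀ E : Finset (Finset ℕ)} {L r : ℕ → ℕ} (h : Components A k a b t E₀ E L r) (g : ℕ → ℕ)
    (hg : ∀ i < t, ((Finset.range t).filter (fun j => g j = g i)).card = k - 1) :
    ∃ E', Good k (b + 1) E' ∧ E₀ ⊆ E' ∧ (∀ e ∈ E', e ∈ E₀ ∨ e ⊆ Finset.Ico a (b + 1)) ∧
      (∀ x ∈ Finset.Ico a (b + 1), ∀ y ∈ Finset.Ico a (b + 1), Conn E' x y) ∧
      (∀ i < b, onlineColor A E' i = onlineColor A E i) ∧
      ∀ i < t, starEdge b t r g (g i) ∈ E' := by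
  have hrb : ∀ i < t, a ≤ r i ∧ r i < b := fun i hi => Finset.mem_Ico.1 (h.rep_mem i hi)
  set E' := E ∪ ((Finset.range t).image g).image (starEdge b t r g) with hE'
  have hmem : ∀ i < t, starEdge b t r g (g i) ∈ E' := fun i hi =>
    Finset.mem_union_right _ (Finset.mem_image_of_mem _
      (Finset.mem_image_of_mem _ (Finset.mem_range.2 hi)))
  have hcases : ∀ e ∈ E', e ∈ E ∨ ∃ i < t, e = starEdge b t r g (g i) := by
    intro e he
    rcases Finset.mem_union.1 he with he | he
    · exact .inl he
    · simp only [Finset.mem_image, Finset.mem_range] at he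
      obtain ⟨_, ⟨i, hi, rfl⟩, rfl⟩ := he
      exact .inr ⟨i, hi, rfl⟩
  have hIco : ∀ c, starEdge b t r g c ⊆ Finset.Ico a (b + 1) := by
    intro c x hx
    rw [Finset.mem_Ico]
    rcases mem_starEdge.1 hx with rfl | ⟨i, hi, -, rfl⟩
    · omega
    · have := hrb i hi; omega
  have hsub : E ⊆ E' := Finset.subset_union_left
  have hb : ∀ x ∈ Finset.Ico a (b + 1), Conn E' x b := by
    intro x hx
    by_cases hxb : x = b
    · rw [hxb]; exact Relation.ReflTransGen.refl
    · obtain ⟨h1, h2⟩ := Finset.mem_Ico.1 hx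
      obtain ⟨i, hi, hc⟩ := h.conn x (Finset.mem_Ico.2 ⟨h1, by omega⟩)
      exact (hc.mono hsub).trans (Conn.single (hmem i hi)
        (mem_starEdge.2 (.inr ⟨i, hi, rfl, rfl⟩)) (mem_starEdge.2 (.inl rfl)))
  refine ⟨E', ⟨?_, h.star_forest g _⟩, h.sub.trans hsub, ?_,
    fun x hx y hy => (hb x hx).trans (hb y hy).symm, ?_, hmem⟩
  · intro e he
    rcases hcases e he with he | ⟨i, hi, rfl⟩
    · exact ⟨(h.good.1 e he).1.trans (Finset.range_subset_range.2 (by omega)), (h.good.1 e he).2⟩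
    · refine ⟨fun x hx => Finset.mem_range.2 (Finset.mem_Ico.1 (hIco _ hx)).2, ?_⟩
      rw [starEdge, Finset.card_insert_of_notMem, Finset.card_image_of_injOn, hg i hi]
      · omega
      · intro x hx y hy hxy
        simp only [Finset.coe_filter, Finset.mem_range, Set.mem_ofPred_eq] at hx hy
        have := h.rep_label x hx.1
        rw [hxy, h.rep_label y hy.1] at this
        exact this.symm
      · simp only [Finset.mem_image, Finset.mem_filter, Finset.mem_range, not_exists, not_and]
        intro x hx
        exact (hrb x hx.1).2.ne
  · intro e he
    rcases hcases e he with he | ⟨i, hi, rfl⟩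
    · exact (h.new e he).imp_right fun h => h.trans (Finset.Ico_subset_Ico le_rfl (by omega))
    · exact .inr (hIco _)
  · intro i hi
    refine onlineColor_eq A hsub (fun e he => (hcases e he).imp_right ?_) hi
    rintro ⟨j, hj, rfl⟩
    exact ⟨b, mem_starEdge.2 (.inl rfl), le_rfl⟩

theorem card_div_fiber {l p i : ℕ} (hl : 0 < l) (hi : i < p * l) :
    ((Finset.range (p * l)).filter (fun j => j / l = i / l)).card = l := by
  have : (Finset.range (p * l)).filter (fun j => j / l = i / l) =
      Finset.Ico (i / l * l) ((i / l + 1) * l) := by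
    have h1 : (i / l + 1) * l ≤ p * l :=
      Nat.mul_le_mul_right l ((Nat.div_lt_iff_lt_mul hl).2 hi)
    ext j
    simp only [Finset.mem_filter, Finset.mem_range, Finset.mem_Ico]
    rw [Nat.div_eq_iff hl]
    have h2 : (i / l + 1) * l = i / l * l + l := by ring
    omega
  rw [this, Nat.card_Ico, add_mul, one_mul, Nat.add_sub_cancel_left]

/-- If `p * l` objects are colored with at most `p` colors, each used at most `l` times, then
exactly `p` colors occur and each is used exactly `l` times. -/
theorem fibers_tight {p l : ℕ} (hl : 0 < l) (f : ℕ → ℕ)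
    (hf : ∀ c, ((Finset.range (p * l)).filter (fun i => f i = c)).card ≤ l)
    (hp : ((Finset.range (p * l)).image f).card ≤ p) :
    p ≤ ((Finset.range (p * l)).image f).card ∧
    ∀ i < p * l, ((Finset.range (p * l)).filter (fun j => f j = f i)).card = l := by
  set J := (Finset.range (p * l)).image f with hJ
  have hsum : ∑ c ∈ J, ((Finset.range (p * l)).filter (fun i => f i = c)).card = p * l := by
    rw [← Finset.card_eq_sum_card_image, Finset.card_range]
  have hle : ∑ c ∈ J, ((Finset.range (p * l)).filter (fun i => f i = c)).card ≤ J.card * l := by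
    rw [← smul_eq_mul]
    exact Finset.sum_le_card_nsmul _ _ _ fun c _ => hf c
  have hpJ : p ≤ J.card := Nat.le_of_mul_le_mul_right (hsum ▸ hle) hl
  refine ⟨hpJ, fun i hi => ?_⟩
  have heq : ∑ c ∈ J, ((Finset.range (p * l)).filter (fun i => f i = c)).card = ∑ c ∈ J, l := by
    rw [hsum, Finset.sum_const, smul_eq_mul, le_antisymm hp hpJ]
  exact (Finset.sum_eq_sum_iff_of_le fun c _ => hf c).1 heq _
    (Finset.mem_image_of_mem f (Finset.mem_range.2 hi))

/-! ### The adversary -/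

theorem exists_block {k : ℕ} (hk : 2 ≤ k) {A : ℕ → Finset (Finset ℕ) → ℕ}
    (hA : ∀ n E, Good k n E → ProperOn A E) :
    ∀ p a E₀, Good k a E₀ → ∃ E, Block A k a (a + k ^ p) (p + 1) E₀ E := by
  intro p
  induction p using Nat.strong_induction_on with
  | _ p ih =>
  intro a E₀ hE₀
  obtain ⟨E, L, r, h⟩ := exists_components hk hE₀ ih _ le_rfl
  rw [← sum_sizes k p hk, ← add_assoc]
  generalize hb : a + ∑ i ∈ Finset.range (p * (k - 1)), k ^ (i / (k - 1)) = b at h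
  have hab : a ≤ b := by omega
  have hrb : ∀ i < p * (k - 1), a ≤ r i ∧ r i < b :=
    fun i hi => Finset.mem_Ico.1 (h.rep_mem i hi)
  set J := (Finset.range (p * (k - 1))).image (fun i => onlineColor A E (r i)) with hJ
  -- Colors of representatives persist in the extension.
  have hJsub : ∀ E', (∀ i < b, onlineColor A E' i = onlineColor A E i) →
      J ⊆ (Finset.Ico a (b + 1)).image (onlineColor A E') := by
    intro E' hcol c hc
    simp only [hJ, Finset.mem_image, Finset.mem_range] at hc
    obtain ⟨i, hi, rfl⟩ := hc
    have := hrb i hi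
    exact Finset.mem_image.2 ⟨r i, Finset.mem_Ico.2 (by omega), hcol _ this.2⟩
  by_cases hcard : p + 1 ≤ J.card
  · obtain ⟨E', h1, h2, h3, h4, h5, -⟩ := h.star hk hab (fun i => i / (k - 1))
      (fun i hi => card_div_fiber (by omega) hi)
    exact ⟨E', h1, h2, h3, h4, hcard.trans (Finset.card_le_card (hJsub E' h5))⟩
  · obtain ⟨hpJ, hfib⟩ := fibers_tight (by omega) (fun i => onlineColor A E (r i)) h.fiber
      (show J.card ≤ p by omega)
    obtain ⟨E', h1, h2, h3, h4, h5, h6⟩ := h.star hk hab (fun i => onlineColor A E (r i)) hfib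
    refine ⟨E', h1, h2, h3, h4, ?_⟩
    -- Properness on the edge grouped by a color forces the apex to avoid that color.
    have hbJ : onlineColor A E' b ∉ J := by
      intro hmem
      obtain ⟨i, hi, hci⟩ := Finset.mem_image.1 hmem
      have hall : ∀ x ∈ starEdge b (p * (k - 1)) r (fun i => onlineColor A E (r i))
          (onlineColor A E (r i)), onlineColor A E' x = onlineColor A E' b := by
        intro x hx
        rcases mem_starEdge.1 hx with rfl | ⟨j, hj, hgj, rfl⟩
        · rfl
        · rw [h5 _ (hrb j hj).2]; exact hgj.trans hci
      obtain ⟨u, hu, w, hw, huw⟩ := hA _ E' h1 _ (h6 i (Finset.mem_range.1 hi))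
      exact huw ((hall u hu).trans (hall w hw).symm)
    calc p + 1 ≤ (insert (onlineColor A E' b) J).card := by
          rw [Finset.card_insert_of_notMem hbJ]; exact Nat.succ_le_succ hpJ
      _ ≤ _ := Finset.card_le_card (Finset.insert_subset
          (Finset.mem_image_of_mem _ (Finset.mem_Ico.2 (by omega))) (hJsub E' h5))

/-- Lower bound for online coloring of k-uniform hypertrees: for k ≥ 2, m ≥ 1 and any
deterministic online coloring algorithm that is proper on every presented k-uniform
hypergraph all of whose prefixes are hyperforests, there are n ≤ k^(m−1) and a k-uniform
hypertree on {0,…,n−1} (each prefix a hyperforest) on which the algorithm uses at least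
m distinct colors. -/
theorem online_hypertree_coloring_lower_bound (k m : ℕ) (hk : 2 ≤ k) (hm : 1 ≤ m)
    (A : ℕ → Finset (Finset ℕ) → ℕ)
    (hA : ∀ n : ℕ, ∀ E : Finset (Finset ℕ),
      (∀ e ∈ E, e ⊆ Finset.range n ∧ e.card = k) →
      (∀ i < n, Hyperforest (prefixEdges E i)) →
      ProperOn A E) :
    ∃ n : ℕ, n ≤ k ^ (m - 1) ∧ ∃ E : Finset (Finset ℕ),
      (∀ e ∈ E, e ⊆ Finset.range n ∧ e.card = k) ∧
      Hypertree n E ∧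
      (∀ i < n, Hyperforest (prefixEdges E i)) ∧
      m ≤ ((Finset.range n).image (onlineColor A E)).card := by
  have hpre : ∀ E i, prefixEdges E i ⊆ E := fun E i => Finset.filter_subset _ _
  have hnil : Good k 0 ∅ := by
    refine ⟨by simp, ?_⟩
    rintro ⟨t, ht, v, e, h1, -⟩
    simpa using h1 0 (by omega)
  obtain ⟨E, ⟨hE, hF⟩, -, -, hconn, hcard⟩ := exists_block hk
    (fun n E hg => hA n E hg.1 fun i _ => hg.2.mono (hpre E i)) (m - 1) 0 ∅ hnil
  rw [zero_add] at hE hconn hcard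
  refine ⟨k ^ (m - 1), le_rfl, E, hE, ⟨hF, fun u hu w hw => ?_⟩,
    fun i _ => hF.mono (hpre E i), ?_⟩
  · exact hconn u (by simpa using hu) w (by simpa using hw)
  · rw [Finset.range_eq_Ico]; omega
end
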